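/- arXiv:2211.07380 — 2 statements merged into one kernel-verified Lean document; each statement's English description precedes it below -/
import Mathlib

section
/- Let Λ ≠ 0, γ ∈ ℝ, r_s ∈ ℝ, and let I ⊆ (0,∞) be an open interval with 3r_s/2 ∉ I. Let Ψ(r) := 1 − r_s/r − (Λ/3)r², let φ : I → ℝ be three times differentiable, and define F(r) := 6·(r²Ψ(r)φ'(r))'/r² − γ·φ(r). Then the three equations F(r) = −(3Ψ'(r)/(2Λ))·F'(r), F(r) = −(3Ψ(r)/(Λr))·F'(r), and F(r) = −(3/(4Λr²))·(r²Ψ(r)F'(r))' hold for all r ∈ I if and only if φ satisfies the linear second-order ODE 6·(r²Ψ(r)φ'(r))' = γ·r²·φ(r) for all r ∈ I. -/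
/-!
Both sides are equivalent to `F = 0` on the interval. For the second-order ODE this is division by
`r ^ 2 ≠ 0`. If `F` vanishes on the open interval then so do `F'` and `(r ^ 2 Ψ F')'`, which gives
the three relations. Conversely, subtracting the first two relations at `r` gives
`(Ψ' - 2 Ψ / r) F' = 0`, where `Ψ' - 2 Ψ / r = (3 rs - 2 r) / r ^ 2` is nonzero since
`r ≠ 3 rs / 2`; hence `F' r = 0`, and so `F r = 0`.
-/

/-- Lemma 1 mechanism of the paper: for the action `R² + γ(R − 2Λ)` with `Λ ≠ 0`,
on an open interval `I ⊆ (0,∞)` avoiding `3 r_s / 2`, with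
`Ψ(r) = 1 − r_s/r − (Λ/3) r²` and `F(r) = 6 (r² Ψ φ')' / r² − γ φ(r)`,
the tt-, θθ- and trace components
`F = −(3Ψ'/(2Λ)) F'`, `F = −(3Ψ/(Λ r)) F'`, `F = −(3/(4Λ r²)) (r² Ψ F')'`
hold on `I` if and only if `φ` obeys `6 (r² Ψ φ')' = γ r² φ` on `I`. -/
theorem stmt_1 (Λ γ rs : ℝ) (hΛ : Λ ≠ 0) (x y : ℝ)
    (hI : Set.Ioo x y ⊆ Set.Ioi (0 : ℝ)) (hrs : 3 * rs / 2 ∉ Set.Ioo x y)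
    (φ Ψ F : ℝ → ℝ)
    (hφ1 : DifferentiableOn ℝ φ (Set.Ioo x y))
    (hφ2 : DifferentiableOn ℝ (deriv φ) (Set.Ioo x y))
    (hφ3 : DifferentiableOn ℝ (deriv (deriv φ)) (Set.Ioo x y))
    (hΨ : ∀ r : ℝ, Ψ r = 1 - rs / r - Λ / 3 * r ^ 2)
    (hF : ∀ r : ℝ, F r = 6 * deriv (fun s => s ^ 2 * Ψ s * deriv φ s) r / r ^ 2 - γ * φ r) :
    ((∀ r ∈ Set.Ioo x y,
        F r = -(3 * deriv Ψ r / (2 * Λ)) * deriv F r ∧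
        F r = -(3 * Ψ r / (Λ * r)) * deriv F r ∧
        F r = -(3 / (4 * Λ * r ^ 2)) * deriv (fun s => s ^ 2 * Ψ s * deriv F s) r)
      ↔ (∀ r ∈ Set.Ioo x y,
          6 * deriv (fun s => s ^ 2 * Ψ s * deriv φ s) r = γ * r ^ 2 * φ r)) := by
  have hFz : ∀ r ∈ Set.Ioo x y,
      (F r = 0 ↔ 6 * deriv (fun s => s ^ 2 * Ψ s * deriv φ s) r = γ * r ^ 2 * φ r) := by
    intro r hr
    have hr0 : r ≠ 0 := ne_of_gt (hI hr)
    rw [hF r, sub_eq_zero, div_eq_iff (pow_ne_zero 2 hr0), mul_right_comm γ]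
  constructor
  · intro h r hr
    obtain ⟨h1, h2, -⟩ := h r hr
    have hr0 : r ≠ 0 := ne_of_gt (hI hr)
    have hd : deriv Ψ r = rs / r ^ 2 - 2 * Λ / 3 * r := by
      rw [show Ψ = fun s => 1 - rs * s⁻¹ - Λ / 3 * s ^ 2 from
        funext fun s => by rw [hΨ s, div_eq_mul_inv rs s]]
      have := (((hasDerivAt_inv hr0).const_mul rs).const_sub 1).sub
        ((hasDerivAt_pow 2 r).const_mul (Λ / 3))
      refine this.deriv.trans ?_
      field_simp
      push_cast
      ring
    have hne : 3 * rs - 2 * r ≠ 0 := by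
      intro h0
      apply hrs
      rwa [show 3 * rs / 2 = r by linarith]
    have hF' : deriv F r = 0 := by
      have h3 : (3 * rs - 2 * r) * deriv F r = 0 := by
        have h4 := h1.symm.trans h2
        rw [hd, hΨ r] at h4
        field_simp at h4
        linarith
      exact (mul_eq_zero.mp h3).resolve_left hne
    rw [hF', mul_zero] at h1
    exact (hFz r hr).mp h1
  · intro h
    have hF0 : ∀ r ∈ Set.Ioo x y, F r = 0 := fun r hr => (hFz r hr).mpr (h r hr)
    -- Vanishing on an open set passes to the derivative.
    have hder : ∀ G : ℝ → ℝ, (∀ r ∈ Set.Ioo x y, G r = 0) →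
        ∀ r ∈ Set.Ioo x y, deriv G r = 0 := by
      intro G hG r hr
      have : G =ᶠ[nhds r] fun _ => 0 := by
        filter_upwards [isOpen_Ioo.mem_nhds hr] with s hs using hG s hs
      rw [this.deriv_eq, deriv_const]
    have hF' := hder F hF0
    have hF'' := hder (fun s => s ^ 2 * Ψ s * deriv F s)
      fun s hs => by simp only [hF' s hs, mul_zero]
    intro r hr
    rw [hF0 r hr, hF' r hr, hF'' r hr]
    simp
end

section
/- Let r_s > 0 and k ∈ ℝ, and set ζ := √(1 + 3k²/r_s²). For ρ > r_s define the areal coordinate r(ρ) := ζ·r_s·(1 − r_s/ρ)^{(ζ−1)/2} / (1 − (1 − r_s/ρ)^ζ). Then r(ρ)/ρ → 1 as ρ → ∞. -/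
/-! Put `x = 1 - rs / ρ`, so that `x → 1` with `x ≠ 1` as `ρ → ∞`, and `rs / ρ = 1 - x`. Then
`r(ρ) / ρ = ζ x ^ ((ζ - 1) / 2) / s(x)`, where `s(x) = (x ^ ζ - 1) / (x - 1)` is the difference
quotient of `x ↦ x ^ ζ` at `1`. Since `s(x) → ζ ≠ 0` and `x ^ ((ζ - 1) / 2) → 1`, the quotient
tends to `1`. -/

/-- For the special Buchdahl-inspired metric with `r_s > 0`, Buchdahl parameter
`k` and `ζ = √(1 + 3k²/r_s²)`, the areal coordinate
`r(ρ) = ζ r_s (1 − r_s/ρ)^{(ζ−1)/2} / (1 − (1 − r_s/ρ)^ζ)` satisfies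
`r(ρ)/ρ → 1` as `ρ → ∞`. -/
theorem stmt_11 (rs k ζ : ℝ) (hrs : 0 < rs)
    (hζ : ζ = Real.sqrt (1 + 3 * k ^ 2 / rs ^ 2)) :
    Filter.Tendsto
      (fun ρ : ℝ =>
        (ζ * rs * (1 - rs / ρ) ^ ((ζ - 1) / 2)
          / (1 - (1 - rs / ρ) ^ ζ)) / ρ)
      Filter.atTop (nhds 1) := by
  have hζ0 : 0 < ζ := by
    rw [hζ]
    positivity
  have hx : Filter.Tendsto (fun ρ : ℝ => 1 - rs / ρ) Filter.atTop (nhds 1) := by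
    simpa using (Filter.Tendsto.const_div_atTop Filter.tendsto_id rs).const_sub 1
  have hx' : Filter.Tendsto (fun ρ : ℝ => 1 - rs / ρ) Filter.atTop (nhdsWithin 1 {1}ᶜ) := by
    refine tendsto_nhdsWithin_iff.2 ⟨hx, ?_⟩
    filter_upwards [Filter.eventually_gt_atTop 0] with ρ hρ
    have : 0 < rs / ρ := by positivity
    simp only [Set.mem_compl_iff, Set.mem_singleton_iff]
    linarith
  have hd : HasDerivAt (fun x : ℝ => x ^ ζ) ζ 1 := by
    simpa using Real.hasDerivAt_rpow_const (x := 1) (p := ζ) (Or.inl one_ne_zero)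
  have hs := (hasDerivAt_iff_tendsto_slope.1 hd).comp hx'
  have hp : Filter.Tendsto (fun ρ : ℝ => (1 - rs / ρ) ^ ((ζ - 1) / 2))
      Filter.atTop (nhds 1) := by
    simpa using hx.rpow_const (p := (ζ - 1) / 2) (Or.inl one_ne_zero)
  have h := (hp.const_mul ζ).div hs hζ0.ne'
  rw [mul_one, div_self hζ0.ne'] at h
  refine h.congr fun ρ => ?_
  simp only [Pi.div_apply, Function.comp_apply, slope_def_field, Real.one_rpow]
  -- This holds for every `ρ`, including where a denominator vanishes, as `a / 0 = 0`.
  rw [← neg_sub 1 ((1 - rs / ρ) ^ ζ), sub_sub_cancel_left, neg_div_neg_eq, div_div_eq_mul_div]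
  ring
end
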